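/- Let Q be a regular local ring, f₁,…,f_c a Q-regular sequence, and R = Q/(f₁,…,f_c) (a local complete intersection). Let M and N be finitely generated R-modules such that at least one of M, N is maximal Cohen–Macaulay. If Tor_i^R(M,N) = 0 for all sufficiently large i, then Tor_i^R(M,N) = 0 for all i > 0. -/

import Mathlib

/-!
STATEMENT 3: Over a local complete intersection `R = Q ⧸ (f₁, …, f_c)`, if at least one of the
finitely generated `R`-modules `M`, `N` is maximal Cohen–Macaulay (depth = dim R) and
`Tor_i^R(M, N) = 0` for all sufficiently large `i`, then `Tor_i^R(M, N) = 0` for all `i > 0`.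
-/

open CategoryTheory CategoryTheory.Limits

universe u

/-- A Noetherian local ring is regular if its maximal ideal can be generated by
(Krull dimension of the ring) many elements. -/
def IsRegularLocal (Q : Type u) [CommRing Q] [IsLocalRing Q] : Prop :=
  IsNoetherianRing Q ∧ ∃ s : Finset Q, Ideal.span (s : Set Q) = IsLocalRing.maximalIdeal Q ∧
    (s.card : WithBot ℕ∞) = ringKrullDim Q

/-- The depth of a module over a Noetherian local ring: the length of a maximal `M`-regular
sequence contained in the maximal ideal, i.e. the supremum of lengths of `M`-regular sequences
of elements of the maximal ideal. -/
noncomputable def moduleDepth (R : Type u) [CommRing R] [IsLocalRing R]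
    (M : Type u) [AddCommGroup M] [Module R M] : ℕ∞ :=
  sSup {n : ℕ∞ | ∃ rs : List R, n = (rs.length : ℕ∞) ∧
    (∀ x ∈ rs, x ∈ IsLocalRing.maximalIdeal R) ∧ RingTheory.Sequence.IsRegular M rs}

/-!
If `A = B ⧸ (r)` with `r` regular on `B` and `0 → K → F → M → 0` is a presentation over `B` of an
`A`-module `M` with `F` free, then `Tor₁^B(A, M) = M`, so that base change gives an exact sequence
`0 → M → A ⊗ K → A ⊗ F → M → 0`. Hence `Tor^A(M, N)` is `2`-periodic up to
`Tor^A(A ⊗ K, N) = Tor^B(K, N)`, and a vanishing range for `K` over `B` passes to `M` over `A`. The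
projective dimension of `K` over `Q` is one less than that of `M`, which starts out at most `c` by
the Auslander–Buchsbaum formula, so after removing `f_c, …, f₁` one by one a projective
`Q`-module remains.
-/

section Tor

open MonoidalCategory

lemma exact_rangeRestrict_of_exact {A X Y Z : Type*} [Ring A] [AddCommGroup X] [Module A X]
    [AddCommGroup Y] [Module A Y] [AddCommGroup Z] [Module A Z] {f : X →ₗ[A] Y} {g : Y →ₗ[A] Z}
    (h : Function.Exact f g) : Function.Exact f g.rangeRestrict :=
  fun y ↦ Subtype.ext_iff.trans (h y)

/-- `Tor_i^A(M, N) = 0`, for unbundled modules. -/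
def TorVanishes (A : Type u) [CommRing A] (M N : Type u) [AddCommGroup M] [Module A M]
    [AddCommGroup N] [Module A N] (i : ℕ) : Prop :=
  IsZero (((Tor (ModuleCat.{u} A) i).obj (ModuleCat.of A M)).obj (ModuleCat.of A N))

/-- `Tor_i^A(M, N) = 0` for all `i > n`. -/
def TorVanishesAbove (A : Type u) [CommRing A] (M N : Type u) [AddCommGroup M] [Module A M]
    [AddCommGroup N] [Module A N] (n : ℕ) : Prop :=
  ∀ i, n < i → TorVanishes A M N i

namespace TorVanishes

variable {A : Type u} [CommRing A]

/-- The complex `M ⊗ P` for `P` the chosen projective resolution of `N`, whose homology is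
`Tor(M, N)`. -/
noncomputable abbrev tensorResolution (M N : ModuleCat.{u} A) : ChainComplex (ModuleCat.{u} A) ℕ :=
  (((tensoringLeft (ModuleCat.{u} A)).obj M).mapHomologicalComplex _).obj
    (projectiveResolution N).complex

lemma iff_isZero_homology (M N : Type u) [AddCommGroup M] [Module A M] [AddCommGroup N]
    [Module A N] (i : ℕ) : TorVanishes A M N i ↔
      IsZero ((tensorResolution (ModuleCat.of A M) (ModuleCat.of A N)).homology i) :=
  Iso.isZero_iff ((projectiveResolution _).isoLeftDerivedObj _ i)

lemma iff_exact_lTensor (M N : Type u) [AddCommGroup M] [Module A M] [AddCommGroup N]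
    [Module A N] (i : ℕ) : TorVanishes A M N (i + 1) ↔
      Function.Exact
        (((projectiveResolution (ModuleCat.of A N)).complex.d (i + 2) (i + 1)).hom.lTensor M)
        (((projectiveResolution (ModuleCat.of A N)).complex.d (i + 1) i).hom.lTensor M) := by
  rw [iff_isZero_homology, ← HomologicalComplex.exactAt_iff_isZero_homology,
    HomologicalComplex.exactAt_iff' _ (i + 2) (i + 1) i (by simp) (by simp),
    ShortComplex.ShortExact.moduleCat_exact_iff_function_exact]
  rfl

instance (M : ModuleCat.{u} A) [Projective M] : Module.Flat A M :=
  have := (IsProjective.iff_projective M).mpr ‹_›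
  inferInstance

/-- A short complex `S` tensored with the chosen projective resolution of `N`: the source of the
long exact sequence of Tor in the first variable. -/
noncomputable abbrev tensorShortComplex (S : ShortComplex (ModuleCat.{u} A)) (N : ModuleCat.{u} A) :
    ShortComplex (ChainComplex (ModuleCat.{u} A) ℕ) where
  X₁ := tensorResolution S.X₁ N
  X₂ := tensorResolution S.X₂ N
  X₃ := tensorResolution S.X₃ N
  f := (NatTrans.mapHomologicalComplex ((tensoringLeft _).map S.f) _).app _
  g := (NatTrans.mapHomologicalComplex ((tensoringLeft _).map S.g) _).app _
  zero := by
    ext n : 1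
    have : S.f ▷ (projectiveResolution N).complex.X n ≫
        S.g ▷ (projectiveResolution N).complex.X n = 0 := by
      rw [← comp_whiskerRight, S.zero, MonoidalPreadditive.zero_whiskerRight]
    exact this

lemma tensorShortComplex_shortExact {S : ShortComplex (ModuleCat.{u} A)} (hS : S.ShortExact)
    (N : ModuleCat.{u} A) : (tensorShortComplex S N).ShortExact :=
  HomologicalComplex.shortExact_of_degreewise_shortExact _ fun n ↦
    hS.map_of_exact (tensorRight ((projectiveResolution N).complex.X n))

section LongExactSequence

variable {X Y Z : Type u} [AddCommGroup X] [Module A X] [AddCommGroup Y] [Module A Y]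
  [AddCommGroup Z] [Module A Z] {f : X →ₗ[A] Y} {g : Y →ₗ[A] Z}
  {N : Type u} [AddCommGroup N] [Module A N] {i : ℕ}

lemma middle (hf : Function.Injective f) (hfg : Function.Exact f g) (hg : Function.Surjective g)
    (hX : TorVanishes A X N i) (hZ : TorVanishes A Z N i) : TorVanishes A Y N i := by
  have hS := ModuleCat.shortComplex_shortExact
    (ModuleCat.shortComplexOfCompEqZero f g hfg.linearMap_comp_eq_zero) hfg hf hg
  rw [iff_isZero_homology] at *
  exact ((tensorShortComplex_shortExact hS _).homology_exact₂ i).isZero_of_both_zeros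
    (hX.eq_zero_of_src _) (hZ.eq_zero_of_tgt _)

lemma right (hf : Function.Injective f) (hfg : Function.Exact f g) (hg : Function.Surjective g)
    (hY : TorVanishes A Y N (i + 1)) (hX : TorVanishes A X N i) : TorVanishes A Z N (i + 1) := by
  have hS := ModuleCat.shortComplex_shortExact
    (ModuleCat.shortComplexOfCompEqZero f g hfg.linearMap_comp_eq_zero) hfg hf hg
  rw [iff_isZero_homology] at *
  exact ((tensorShortComplex_shortExact hS _).homology_exact₃ (i + 1) i rfl).isZero_of_both_zeros
    (hY.eq_zero_of_src _) (hX.eq_zero_of_tgt _)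

lemma left (hf : Function.Injective f) (hfg : Function.Exact f g) (hg : Function.Surjective g)
    (hZ : TorVanishes A Z N (i + 1)) (hY : TorVanishes A Y N i) : TorVanishes A X N i := by
  have hS := ModuleCat.shortComplex_shortExact
    (ModuleCat.shortComplexOfCompEqZero f g hfg.linearMap_comp_eq_zero) hfg hf hg
  rw [iff_isZero_homology] at *
  exact ((tensorShortComplex_shortExact hS _).homology_exact₁ (i + 1) i rfl).isZero_of_both_zeros
    (hZ.eq_zero_of_src _) (hY.eq_zero_of_tgt _)

end LongExactSequence

section Syzygy

lemma exact_resolution (N : ModuleCat.{u} A) (i : ℕ) : Function.Exact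
    ((projectiveResolution N).complex.d (i + 2) (i + 1)).hom
    ((projectiveResolution N).complex.d (i + 1) i).hom := by
  have := (projectiveResolution N).complex_exactAt_succ i
  rwa [HomologicalComplex.exactAt_iff' _ (i + 2) (i + 1) i (by simp) (by simp),
    ShortComplex.ShortExact.moduleCat_exact_iff_function_exact] at this

lemma exact_resolution_augmentation (N : ModuleCat.{u} A) : Function.Exact
    ((projectiveResolution N).complex.d 1 0).hom ((projectiveResolution N).π.f 0).hom := by
  have := (projectiveResolution N).exact₀
  rwa [ShortComplex.ShortExact.moduleCat_exact_iff_function_exact] at this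

lemma of_flat (M N : Type u) [AddCommGroup M] [Module A M] [AddCommGroup N] [Module A N]
    [Module.Flat A M] (i : ℕ) : TorVanishes A M N (i + 1) := by
  rw [iff_exact_lTensor]
  exact Module.Flat.lTensor_exact M (exact_resolution _ _)

/-- The `(i + 1)`-st syzygy of `N`: the image of `P_{i + 1}` in `P_i`, for `P` the chosen
projective resolution of `N`. -/
noncomputable abbrev syzygy (N : Type u) [AddCommGroup N] [Module A N] (i : ℕ) :
    Submodule A ((projectiveResolution (ModuleCat.of A N)).complex.X i) :=
  LinearMap.range ((projectiveResolution (ModuleCat.of A N)).complex.d (i + 1) i).hom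

lemma iff_injective_lTensor_syzygy (M N : Type u) [AddCommGroup M] [Module A M] [AddCommGroup N]
    [Module A N] (i : ℕ) : TorVanishes A M N (i + 1) ↔
      Function.Injective ((syzygy (A := A) N i).subtype.lTensor M) := by
  rw [iff_exact_lTensor]
  set d := ((projectiveResolution (ModuleCat.of A N)).complex.d (i + 1) i).hom
  set e := ((projectiveResolution (ModuleCat.of A N)).complex.d (i + 2) (i + 1)).hom
  have hd : d = (syzygy N i).subtype ∘ₗ d.rangeRestrict := rfl
  have hed : Function.Exact e d.rangeRestrict := exact_rangeRestrict_of_exact (exact_resolution _ i)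
  have hex := lTensor_exact M hed d.surjective_rangeRestrict
  rw [hd, LinearMap.lTensor_comp]
  refine ⟨fun h ↦ ?_, fun h t ↦ ?_⟩
  · rw [injective_iff_map_eq_zero]
    intro t ht
    obtain ⟨t, rfl⟩ := d.rangeRestrict.lTensor_surjective M d.surjective_rangeRestrict t
    exact (hex t).mpr ((h t).mp ht)
  · rw [← hex t, LinearMap.comp_apply, map_eq_zero_iff _ h]

variable (N : Type u) [AddCommGroup N] [Module A N]

lemma surjective_augmentation :
    Function.Surjective ((projectiveResolution (ModuleCat.of A N)).π.f 0).hom :=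
  (ModuleCat.epi_iff_surjective _).mp inferInstance

lemma exact_syzygy_augmentation : Function.Exact (syzygy (A := A) N 0).subtype
    ((projectiveResolution (ModuleCat.of A N)).π.f 0).hom := fun x ↦ by
  rw [exact_resolution_augmentation (ModuleCat.of A N) x]
  simp

lemma exact_syzygy_succ (i : ℕ) : Function.Exact (syzygy (A := A) N (i + 1)).subtype
    ((projectiveResolution (ModuleCat.of A N)).complex.d (i + 1) i).hom.rangeRestrict := fun x ↦
  (exact_rangeRestrict_of_exact (exact_resolution _ i) x).trans (by simp)

end Syzygy

section Symmetry

variable {K F M N : Type u} [AddCommGroup K] [Module A K] [AddCommGroup F] [Module A F]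
  [AddCommGroup M] [Module A M] [AddCommGroup N] [Module A N] {k : K →ₗ[A] F} {p : F →ₗ[A] M}

/-- A snake in the `3 × 3` square of the tensor products of `K → F → M` with `Z → P → N`. -/
lemma injective_rTensor_of_injective_lTensor {Z P : Type u} [AddCommGroup Z] [Module A Z]
    [AddCommGroup P] [Module A P] {z : Z →ₗ[A] P} {q : P →ₗ[A] N} [Module.Flat A P]
    (hk : Function.Injective k) (hkp : Function.Exact k p) (hp : Function.Surjective p)
    (hzq : Function.Exact z q) (hq : Function.Surjective q)
    (h : Function.Injective (z.lTensor M)) : Function.Injective (k.rTensor N) := by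
  rw [injective_iff_map_eq_zero]
  intro t ht
  obtain ⟨t, rfl⟩ := q.lTensor_surjective K hq t
  have hqt : q.lTensor F (k.rTensor P t) = 0 := by
    rw [← ht, ← LinearMap.comp_apply, ← LinearMap.comp_apply, LinearMap.lTensor_comp_rTensor,
      LinearMap.rTensor_comp_lTensor]
  obtain ⟨s, hs⟩ := (lTensor_exact F hzq hq _).mp hqt
  have hps : p.rTensor Z s = 0 := by
    apply h
    rw [map_zero, ← LinearMap.comp_apply, LinearMap.lTensor_comp_rTensor,
      ← LinearMap.rTensor_comp_lTensor, LinearMap.comp_apply, hs]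
    exact (rTensor_exact P hkp hp).apply_apply_eq_zero t
  obtain ⟨s, rfl⟩ := (rTensor_exact Z hkp hp _).mp hps
  have hst : t = z.lTensor K s := by
    apply Module.Flat.rTensor_preserves_injective_linearMap (M := P) k hk
    rw [← hs, ← LinearMap.comp_apply, ← LinearMap.comp_apply, LinearMap.lTensor_comp_rTensor,
      LinearMap.rTensor_comp_lTensor]
  rw [hst]
  exact (lTensor_exact K hzq hq).apply_apply_eq_zero s

lemma one_iff_injective_lTensor [Module.Flat A F] (hk : Function.Injective k)
    (hkp : Function.Exact k p) (hp : Function.Surjective p) :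
    TorVanishes A M N 1 ↔ Function.Injective (k.lTensor N) := by
  rw [iff_injective_lTensor_syzygy M N 0, LinearMap.lTensor_inj_iff_rTensor_inj N k]
  refine ⟨injective_rTensor_of_injective_lTensor hk hkp hp (exact_syzygy_augmentation N)
    (surjective_augmentation N), fun h ↦ ?_⟩
  rw [← LinearMap.lTensor_inj_iff_rTensor_inj] at h
  rw [LinearMap.lTensor_inj_iff_rTensor_inj]
  exact injective_rTensor_of_injective_lTensor (Submodule.subtype_injective _)
    (exact_syzygy_augmentation N) (surjective_augmentation N) hkp hp h

lemma succ_succ_iff [Module.Flat A F] (hk : Function.Injective k) (hkp : Function.Exact k p)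
    (hp : Function.Surjective p) (i : ℕ) :
    TorVanishes A M N (i + 2) ↔ TorVanishes A K N (i + 1) :=
  ⟨fun h ↦ left hk hkp hp h (of_flat F N i), right hk hkp hp (of_flat F N (i + 1))⟩

lemma succ_succ_iff_syzygy (M N : Type u) [AddCommGroup M] [Module A M] [AddCommGroup N]
    [Module A N] (i j : ℕ) :
    TorVanishes A N M (i + j + 2) ↔ TorVanishes A (syzygy (A := A) N i) M (j + 1) := by
  induction i generalizing j with
  | zero =>
    rw [zero_add]
    exact succ_succ_iff (Submodule.subtype_injective _) (exact_syzygy_augmentation N)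
      (surjective_augmentation N) j
  | succ i ih =>
    rw [show i + 1 + j + 2 = i + (j + 1) + 2 by ring, ih (j + 1)]
    exact succ_succ_iff (Submodule.subtype_injective _) (exact_syzygy_succ N i)
      (LinearMap.surjective_rangeRestrict _) j

lemma symm {i : ℕ} (h : TorVanishes A M N (i + 1)) : TorVanishes A N M (i + 1) := by
  rw [iff_injective_lTensor_syzygy] at h
  cases i with
  | zero =>
    exact (one_iff_injective_lTensor (Submodule.subtype_injective _) (exact_syzygy_augmentation N)
      (surjective_augmentation N)).mpr h
  | succ i =>
    rw [succ_succ_iff_syzygy M N i 0]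
    exact (one_iff_injective_lTensor (Submodule.subtype_injective _) (exact_syzygy_succ N i)
      (LinearMap.surjective_rangeRestrict _)).mpr h

end Symmetry

section FourTermSequence

variable {L X P M N : Type u} [AddCommGroup L] [Module A L] [AddCommGroup X] [Module A X]
  [AddCommGroup P] [Module A P] [AddCommGroup M] [Module A M] [AddCommGroup N] [Module A N]
  [Module.Flat A P] {j : L →ₗ[A] X} {g : X →ₗ[A] P} {q : P →ₗ[A] M} {i : ℕ}

lemma range_iff_of_exact (hgq : Function.Exact g q) (hq : Function.Surjective q) :
    TorVanishes A g.range N (i + 1) ↔ TorVanishes A M N (i + 2) :=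
  (succ_succ_iff (Submodule.subtype_injective _) (fun x ↦ (hgq x).trans (by simp)) hq i).symm

lemma second_of_exact_four (hj : Function.Injective j) (hjg : Function.Exact j g)
    (hgq : Function.Exact g q) (hq : Function.Surjective q) (hL : TorVanishes A L N (i + 1))
    (hM : TorVanishes A M N (i + 2)) : TorVanishes A X N (i + 1) :=
  middle hj (exact_rangeRestrict_of_exact hjg) g.surjective_rangeRestrict hL
    ((range_iff_of_exact hgq hq).mpr hM)

lemma first_of_exact_four (hj : Function.Injective j) (hjg : Function.Exact j g)
    (hgq : Function.Exact g q) (hq : Function.Surjective q) (hX : TorVanishes A X N (i + 1))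
    (hM : TorVanishes A M N (i + 3)) : TorVanishes A L N (i + 1) :=
  left hj (exact_rangeRestrict_of_exact hjg) g.surjective_rangeRestrict
    ((range_iff_of_exact hgq hq).mpr hM) hX

end FourTermSequence

end TorVanishes

lemma TorVanishesAbove.symm {A : Type u} [CommRing A] {M N : Type u} [AddCommGroup M] [Module A M]
    [AddCommGroup N] [Module A N] {n : ℕ} (h : TorVanishesAbove A M N n) :
    TorVanishesAbove A N M n
  | i + 1, hi => (h (i + 1) hi).symm

/-- As `Tor(X, N)` vanishes in high degrees, `0 → M → X → P → M → 0` propagates vanishing of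
`Tor(M, N)` downwards in steps of two. -/
lemma TorVanishesAbove.of_exact_four {A : Type u} [CommRing A] {X P M N : Type u}
    [AddCommGroup X] [Module A X] [AddCommGroup P] [Module A P] [Module.Flat A P]
    [AddCommGroup M] [Module A M] [AddCommGroup N] [Module A N]
    {j : M →ₗ[A] X} {g : X →ₗ[A] P} {q : P →ₗ[A] M} (hj : Function.Injective j)
    (hjg : Function.Exact j g) (hgq : Function.Exact g q) (hq : Function.Surjective q) {k : ℕ}
    (hX : (∃ n, TorVanishesAbove A X N n) → TorVanishesAbove A X N k)
    (h : ∃ n, TorVanishesAbove A M N n) : TorVanishesAbove A M N k := by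
  obtain ⟨n, hn⟩ := h
  replace hX : TorVanishesAbove A X N k := hX ⟨n, fun
    | i + 1, hi => .second_of_exact_four hj hjg hgq hq (hn _ hi) (hn _ (by lia))⟩
  have hdown : ∀ i, k < i → TorVanishes A M N (i + 2) → TorVanishes A M N i
    | i + 1, hi, hM => .first_of_exact_four hj hjg hgq hq (hX _ hi) hM
  have hall (m : ℕ) : ∀ i, k < i → n < i + 2 * m → TorVanishes A M N i := by
    induction m with
    | zero => exact fun i _ hi ↦ hn i hi
    | succ m ih => exact fun i hki hi ↦ hdown i hki (ih (i + 2) (by lia) (by lia))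
  exact fun i hi ↦ hall n i hi (by lia)

end Tor

section ChangeOfRings

open TensorProduct

variable {B A : Type u} [CommRing B] [CommRing A] [Algebra B A]

lemma exists_free_surjective (B M : Type u) [CommRing B] [AddCommGroup M] [Module B M] :
    ∃ (F : Type u) (_ : AddCommGroup F) (_ : Module B F) (_ : Module.Free B F) (p : F →ₗ[B] M),
      Function.Surjective p :=
  ⟨M →₀ B, inferInstance, inferInstance, inferInstance, Finsupp.linearCombination B id,
    Finsupp.linearCombination_id_surjective B M⟩

namespace TorVanishes

lemma injective_lTensor_baseChange_iff {K F N : Type u} [AddCommGroup K] [Module B K]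
    [AddCommGroup F] [Module B F] [AddCommGroup N] [Module A N] [Module B N] [IsScalarTower B A N]
    (k : K →ₗ[B] F) : Function.Injective ((k.baseChange A).lTensor N) ↔
      Function.Injective (k.lTensor N) := by
  have : AlgebraTensorModule.lTensor A N k ∘ₗ
        (AlgebraTensorModule.cancelBaseChange B A A N K).toLinearMap =
      (AlgebraTensorModule.cancelBaseChange B A A N F).toLinearMap ∘ₗ
        (k.baseChange A).lTensor N := by
    ext; simp
  replace this : k.lTensor N ∘ AlgebraTensorModule.cancelBaseChange B A A N K =
      AlgebraTensorModule.cancelBaseChange B A A N F ∘ (k.baseChange A).lTensor N :=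
    congrArg DFunLike.coe this
  rw [← EquivLike.comp_injective _ (AlgebraTensorModule.cancelBaseChange B A A N F), ← this,
    EquivLike.injective_comp]

lemma baseChange_iff (M N : Type u) [AddCommGroup M] [Module B M] [AddCommGroup N] [Module A N]
    [Module B N] [IsScalarTower B A N] (h : TorVanishesAbove B M A 0) (i : ℕ) :
    TorVanishes A (A ⊗[B] M) N (i + 1) ↔ TorVanishes B M N (i + 1) := by
  induction i using Nat.strong_induction_on generalizing M with | _ i ih
  obtain ⟨F, _, _, _, p, hp⟩ := exists_free_surjective B M
  let k := p.ker.subtype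
  have hk : Function.Injective k := Submodule.subtype_injective p.ker
  have hkp : Function.Exact k p := p.exact_subtype_ker_map
  have hpA : Function.Surjective (p.baseChange A) := p.lTensor_surjective A hp
  have hkA : Function.Injective (k.baseChange A) := by
    have h₁ := h 1 one_pos
    rwa [one_iff_injective_lTensor hk hkp hp] at h₁
  have hkpA : Function.Exact (k.baseChange A) (p.baseChange A) := lTensor_exact A hkp hp
  cases i with
  | zero =>
    rw [one_iff_injective_lTensor hk hkp hp, one_iff_injective_lTensor hkA hkpA hpA,
      injective_lTensor_baseChange_iff]
  | succ i =>
    rw [succ_succ_iff hk hkp hp, succ_succ_iff hkA hkpA hpA]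
    exact ih i (by lia) _ fun
      | j + 1, _ => (succ_succ_iff hk hkp hp j).mp (h (j + 2) (by lia))

end TorVanishes

variable {r : B}

lemma exact_toSpanSingleton_linearMap (hker : RingHom.ker (algebraMap B A) = Ideal.span {r}) :
    Function.Exact (LinearMap.toSpanSingleton B B r) (Algebra.linearMap B A) := fun x ↦ by
  have : x ∈ RingHom.ker (algebraMap B A) ↔ x ∈ Ideal.span {r} := by rw [hker]
  rw [RingHom.mem_ker, Ideal.mem_span_singleton'] at this
  simpa using this

lemma lid_rTensor_toSpanSingleton (r : B) {V : Type u} [AddCommGroup V] [Module B V]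
    (t : B ⊗[B] V) : TensorProduct.lid B V ((LinearMap.toSpanSingleton B B r).rTensor V t) =
      r • TensorProduct.lid B V t := by
  have : (TensorProduct.lid B V).toLinearMap ∘ₗ (LinearMap.toSpanSingleton B B r).rTensor V =
      r • (TensorProduct.lid B V).toLinearMap := by
    ext; simp
  exact LinearMap.congr_fun this t

lemma algebraMap_eq_zero_of_ker (hker : RingHom.ker (algebraMap B A) = Ideal.span {r}) :
    algebraMap B A r = 0 := by
  rw [← RingHom.mem_ker, hker]
  exact Ideal.mem_span_singleton_self r

lemma one_tmul_eq_zero_iff (hA : Function.Surjective (algebraMap B A))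
    (hker : RingHom.ker (algebraMap B A) = Ideal.span {r}) {V : Type u} [AddCommGroup V]
    [Module B V] {y : V} : (1 : A) ⊗ₜ[B] y = 0 ↔ ∃ v : V, r • v = y := by
  constructor
  · intro hy
    have hy' : (Algebra.linearMap B A).rTensor V (1 ⊗ₜ y) = 0 := by simpa using hy
    obtain ⟨t, ht⟩ := (rTensor_exact V (exact_toSpanSingleton_linearMap hker) hA _).mp hy'
    refine ⟨TensorProduct.lid B V t, ?_⟩
    rw [← lid_rTensor_toSpanSingleton, ht, TensorProduct.lid_tmul, one_smul]
  · rintro ⟨v, rfl⟩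
    rw [TensorProduct.tmul_smul, TensorProduct.smul_tmul', Algebra.smul_def,
      algebraMap_eq_zero_of_ker hker, zero_mul, TensorProduct.zero_tmul]

lemma torVanishesAbove_zero_of_isSMulRegular (hA : Function.Surjective (algebraMap B A))
    (hker : RingHom.ker (algebraMap B A) = Ideal.span {r}) (hr : IsSMulRegular B r)
    {V : Type u} [AddCommGroup V] [Module B V] (hV : IsSMulRegular V r) :
    TorVanishesAbove B V A 0 := by
  have hinj : Function.Injective (LinearMap.toSpanSingleton B B r) := fun x y hxy ↦
    hr (by simpa [mul_comm] using hxy)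
  have hexact := exact_toSpanSingleton_linearMap hker
  refine TorVanishesAbove.symm fun
    | 1, _ => ?_
    | i + 2, _ => (TorVanishes.succ_succ_iff hinj hexact hA i).mpr (.of_flat B V i)
  rw [TorVanishes.one_iff_injective_lTensor hinj hexact hA, LinearMap.lTensor_inj_iff_rTensor_inj]
  intro x y hxy
  apply (TensorProduct.lid B V).injective
  apply hV
  simp only [← lid_rTensor_toSpanSingleton, hxy]

section BaseChangeKer

variable {F M : Type u} [AddCommGroup F] [Module B F] [AddCommGroup M] [Module B M] [Module A M]
  [IsScalarTower B A M] {p : F →ₗ[B] M}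

lemma exact_baseChange_ker_liftBaseChange (hA : Function.Surjective (algebraMap B A)) :
    Function.Exact (p.ker.subtype.baseChange A) (p.liftBaseChange A) := by
  intro t
  obtain ⟨y, rfl⟩ := TensorProduct.mk_surjective B F A hA t
  rw [TensorProduct.mk_apply, LinearMap.liftBaseChange_tmul, one_smul]
  refine ⟨fun hy ↦ ⟨1 ⊗ₜ ⟨y, hy⟩, rfl⟩, ?_⟩
  rintro ⟨s, hs⟩
  obtain ⟨z, rfl⟩ := TensorProduct.mk_surjective B p.ker A hA s
  have := congrArg (p.liftBaseChange A) hs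
  simpa using this.symm

lemma surjective_liftBaseChange (hp : Function.Surjective p) :
    Function.Surjective (p.liftBaseChange A) := fun m ↦ by
  obtain ⟨x, rfl⟩ := hp m
  exact ⟨1 ⊗ₜ x, by simp⟩

/-- The connecting map `Tor₁(A, M) → A ⊗ ker p`, with `Tor₁(A, M)` identified with `M`. -/
lemma exists_linearMap_baseChange_ker (hA : Function.Surjective (algebraMap B A))
    (hker : RingHom.ker (algebraMap B A) = Ideal.span {r}) (hp : Function.Surjective p) :
    ∃ j : M →ₗ[A] A ⊗[B] p.ker, ∀ (x : F) (y : p.ker), r • x = y → j (p x) = 1 ⊗ₜ y := by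
  have hr (x : F) : p (r • x) = 0 := by
    rw [map_smul, ← algebraMap_smul A, algebraMap_eq_zero_of_ker hker, zero_smul]
  let φ : F →ₗ[B] A ⊗[B] p.ker :=
    TensorProduct.mk B A p.ker 1 ∘ₗ (r • LinearMap.id).codRestrict p.ker hr
  have hφ : p.ker ≤ φ.ker := fun x hx ↦
    (one_tmul_eq_zero_iff hA hker).mpr ⟨⟨x, hx⟩, rfl⟩
  refine ⟨(p.ker.liftQ φ hφ ∘ₗ (p.quotKerEquivOfSurjective hp).symm).extendScalarsOfSurjective hA,
    fun x y hxy ↦ ?_⟩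
  have hx : (p.quotKerEquivOfSurjective hp).symm (p x) = p.ker.mkQ x := by
    rw [LinearEquiv.symm_apply_eq]; rfl
  have hy : (r • LinearMap.id).codRestrict p.ker hr x = y := Subtype.ext hxy
  simp [hx, φ, hy]

lemma exists_injective_exact_baseChange_ker (hA : Function.Surjective (algebraMap B A))
    (hker : RingHom.ker (algebraMap B A) = Ideal.span {r}) (hF : IsSMulRegular F r)
    (hp : Function.Surjective p) : ∃ j : M →ₗ[A] A ⊗[B] p.ker,
      Function.Injective j ∧ Function.Exact j (p.ker.subtype.baseChange A) := by
  obtain ⟨j, hj⟩ := exists_linearMap_baseChange_ker hA hker hp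
  have hr (x : F) : r • x ∈ p.ker := by
    rw [LinearMap.mem_ker, map_smul, ← algebraMap_smul A, algebraMap_eq_zero_of_ker hker, zero_smul]
  refine ⟨j, (injective_iff_map_eq_zero j).mpr fun m hm ↦ ?_, fun t ↦ ⟨fun h ↦ ?_, ?_⟩⟩
  · obtain ⟨x, rfl⟩ := hp m
    rw [hj x ⟨r • x, hr x⟩ rfl] at hm
    obtain ⟨y, hy⟩ := (one_tmul_eq_zero_iff hA hker).mp hm
    rw [← hF (congrArg Subtype.val hy)]
    exact y.2
  · obtain ⟨y, rfl⟩ := TensorProduct.mk_surjective B p.ker A hA t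
    obtain ⟨x, hx⟩ := (one_tmul_eq_zero_iff hA hker).mp h
    exact ⟨p x, hj x y hx⟩
  · rintro ⟨m, rfl⟩
    obtain ⟨x, rfl⟩ := hp m
    rw [hj x ⟨r • x, hr x⟩ rfl, LinearMap.baseChange_tmul, one_tmul_eq_zero_iff hA hker]
    exact ⟨x, rfl⟩

/-- The sequence `0 → M → A ⊗ ker p → A ⊗ F → M → 0` is exact, and
`Tor^A(A ⊗ ker p, N) = Tor^B(ker p, N)`. -/
lemma TorVanishesAbove.of_ker (hA : Function.Surjective (algebraMap B A))
    (hker : RingHom.ker (algebraMap B A) = Ideal.span {r}) (hr : IsSMulRegular B r)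
    [Module.Flat B F] {N : Type u} [AddCommGroup N] [Module B N] [Module A N]
    [IsScalarTower B A N] (hp : Function.Surjective p) {k : ℕ}
    (hK : (∃ n, TorVanishesAbove B p.ker N n) → TorVanishesAbove B p.ker N k)
    (h : ∃ n, TorVanishesAbove A M N n) : TorVanishesAbove A M N k := by
  have hF : IsSMulRegular F r :=
    Module.Flat.isSMulRegular_of_isRegular (isLeftRegular_iff_isRegular.mp hr)
  obtain ⟨j, hj, hjk⟩ := exists_injective_exact_baseChange_ker hA hker hF hp
  have hbc (n : ℕ) : TorVanishesAbove A (A ⊗[B] p.ker) N n ↔ TorVanishesAbove B p.ker N n := by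
    have := TorVanishes.baseChange_iff p.ker N
      (torVanishesAbove_zero_of_isSMulRegular hA hker hr (hF.submodule p.ker r))
    exact ⟨fun h ↦ fun | i + 1, hi => (this i).mp (h _ hi),
      fun h ↦ fun | i + 1, hi => (this i).mpr (h _ hi)⟩
  simp only [← hbc] at hK
  exact .of_exact_four hj hjk (exact_baseChange_ker_liftBaseChange hA)
    (surjective_liftBaseChange hp) hK h

end BaseChangeKer

end ChangeOfRings

section ProjectiveDimension

/-- The projective dimension of the `A`-module `M` is at most `n`, for unbundled modules. -/
abbrev ProjDimLE (A : Type u) [CommRing A] (M : Type u) [AddCommGroup M] [Module A M] (n : ℕ) :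
    Prop :=
  HasProjectiveDimensionLE (ModuleCat.of A M) n

namespace ProjDimLE

section

variable {A : Type u} [CommRing A] {X Y Z : Type u} [AddCommGroup X] [Module A X]
  [AddCommGroup Y] [Module A Y] [AddCommGroup Z] [Module A Z] {f : X →ₗ[A] Y} {g : Y →ₗ[A] Z}
  {m n : ℕ}

lemma right (hf : Function.Injective f) (hfg : Function.Exact f g) (hg : Function.Surjective g)
    (hX : ProjDimLE A X n) (hY : ProjDimLE A Y (n + 1)) : ProjDimLE A Z (n + 1) :=
  (ModuleCat.shortComplex_shortExact
    (ModuleCat.shortComplexOfCompEqZero f g hfg.linearMap_comp_eq_zero) hfg hf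
    hg).hasProjectiveDimensionLT_X₃ _ hX hY

lemma left (hf : Function.Injective f) (hfg : Function.Exact f g) (hg : Function.Surjective g)
    (hY : ProjDimLE A Y n) (hZ : ProjDimLE A Z (n + 1)) : ProjDimLE A X n :=
  (ModuleCat.shortComplex_shortExact
    (ModuleCat.shortComplexOfCompEqZero f g hfg.linearMap_comp_eq_zero) hfg hf
    hg).hasProjectiveDimensionLT_X₁ _ hY hZ

lemma mono (hmn : m ≤ n) (_ : ProjDimLE A X m) : ProjDimLE A X n :=
  hasProjectiveDimensionLT_of_ge _ _ _ (Nat.succ_le_succ hmn)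

lemma of_linearEquiv (e : X ≃ₗ[A] Y) (_ : ProjDimLE A X n) : ProjDimLE A Y n :=
  hasProjectiveDimensionLT_of_iso e.toModuleIso _

lemma of_retract (i : X →ₗ[A] Y) (r : Y →ₗ[A] X) (hir : r ∘ₗ i = LinearMap.id)
    (h : ProjDimLE A Y n) : ProjDimLE A X n :=
  Retract.hasProjectiveDimensionLT (Y := ModuleCat.of A Y)
    ⟨ModuleCat.ofHom i, ModuleCat.ofHom r, by rw [← ModuleCat.ofHom_comp, hir]; rfl⟩ _

lemma zero_iff_projective : ProjDimLE A X 0 ↔ Module.Projective A X := by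
  rw [IsProjective.iff_projective, projective_iff_hasProjectiveDimensionLE_zero]

lemma of_projective [Module.Projective A X] (n : ℕ) : ProjDimLE A X n :=
  (zero_iff_projective.mpr ‹_›).mono n.zero_le

lemma quotSMulTop {r : A} (hr : IsSMulRegular X r) (h : ProjDimLE A X n) :
    ProjDimLE A (QuotSMulTop r X) (n + 1) :=
  right (f := LinearMap.lsmul A X r) hr (LinearMap.exact_lsmul_mkQ_smul_top X r)
    (Submodule.mkQ_surjective _) h (h.mono n.le_succ)

lemma quotient_ofList_smul_top {rs : List A} (hrs : RingTheory.Sequence.IsWeaklyRegular X rs)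
    (h : ProjDimLE A X n) :
    ProjDimLE A (X ⧸ Ideal.ofList rs • (⊤ : Submodule A X)) (n + rs.length) := by
  induction rs generalizing X n with
  | nil => exact h.of_linearEquiv (Submodule.quotEquivOfEqBot _ (by simp)).symm
  | cons r rs ih =>
    rw [RingTheory.Sequence.isWeaklyRegular_cons_iff] at hrs
    rw [List.length_cons, add_comm rs.length, ← add_assoc]
    exact (ih hrs.2 (h.quotSMulTop hrs.1)).of_linearEquiv
      (Submodule.quotOfListConsSMulTopEquivQuotSMulTopInner X r rs).symm

lemma finsupp (ι : Type u) (h : ProjDimLE A X n) : ProjDimLE A (ι →₀ X) n := by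
  classical
  induction n generalizing X with
  | zero =>
    rw [zero_iff_projective] at h ⊢
    exact .of_equiv (finsuppLequivDFinsupp (ι := ι) (M := X) A).symm
  | succ n ih =>
    obtain ⟨F, _, _, _, p, hp⟩ := exists_free_surjective A X
    have hk := p.ker.subtype_injective
    have hK : ProjDimLE A p.ker n := left hk p.exact_subtype_ker_map hp (of_projective n) h
    refine right (f := Finsupp.mapRange.linearMap p.ker.subtype)
      (g := Finsupp.mapRange.linearMap p) (Finsupp.mapRange_injective _ (map_zero _) hk) ?_
      (Finsupp.mapRange_surjective _ (map_zero _) hp) (ih hK) (of_projective _)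
    rw [LinearMap.exact_iff, Finsupp.ker_mapRange,
      Finsupp.range_mapRange_linearMap _ p.ker.ker_subtype, Submodule.range_subtype]

end

section RestrictScalars

variable {A B : Type u} [CommRing A] [CommRing B] [Algebra A B] {c : ℕ}

lemma restrictScalars_of_projective (hB : ProjDimLE A B c) (V : Type u) [AddCommGroup V]
    [Module B V] [Module A V] [IsScalarTower A B V] [Module.Projective B V] : ProjDimLE A V c := by
  obtain ⟨s, hs⟩ := Module.projective_def'.mp ‹Module.Projective B V›
  refine of_retract (s.restrictScalars A)
    ((Finsupp.linearCombination B (id : V → V)).restrictScalars A) ?_ (hB.finsupp V)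
  ext v
  exact LinearMap.congr_fun hs v

lemma restrictScalars (hB : ProjDimLE A B c) {n : ℕ} {V : Type u} [AddCommGroup V] [Module B V]
    [Module A V] [IsScalarTower A B V] (hV : ProjDimLE B V n) : ProjDimLE A V (n + c) := by
  induction n generalizing V with
  | zero =>
    have := zero_iff_projective.mp hV
    exact (restrictScalars_of_projective hB V).mono (by lia)
  | succ n ih =>
    obtain ⟨F, _, _, _, p, hp⟩ := exists_free_surjective B V
    let _ : Module A F := Module.compHom F (algebraMap A B)
    have : IsScalarTower A B F := .of_algebraMap_smul fun _ _ ↦ rfl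
    have hk := p.ker.subtype_injective
    have hkp : Function.Exact p.ker.subtype p := p.exact_subtype_ker_map
    have hK : ProjDimLE A p.ker (n + c) := ih (left hk hkp hp (of_projective n) hV)
    rw [Nat.add_right_comm]
    exact right (f := p.ker.subtype.restrictScalars A) (g := p.restrictScalars A) hk hkp hp hK
      ((restrictScalars_of_projective hB F).mono (by lia))

end RestrictScalars

end ProjDimLE

lemma TorVanishesAbove.of_projDimLE {A M : Type u} [CommRing A] [AddCommGroup M] [Module A M]
    (N : Type u) [AddCommGroup N] [Module A N] {n : ℕ} (hM : ProjDimLE A M n) :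
    TorVanishesAbove A M N n := by
  induction n generalizing M with
  | zero =>
    have := ProjDimLE.zero_iff_projective.mp hM
    exact fun | i + 1, _ => .of_flat M N i
  | succ n ih =>
    obtain ⟨F, _, _, _, p, hp⟩ := exists_free_surjective A M
    have hk := p.ker.subtype_injective
    have hkp : Function.Exact p.ker.subtype p := p.exact_subtype_ker_map
    have hK : ProjDimLE A p.ker n := .left hk hkp hp (.of_projective n) hM
    exact fun | i + 2, hi => (TorVanishes.succ_succ_iff hk hkp hp i).mpr (ih hK _ (by lia))

end ProjectiveDimension

section RegularSequence

open RingTheory.Sequence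

lemma ProjDimLE.of_bijective_algebraMap {Q A M : Type u} [CommRing Q] [CommRing A] [Algebra Q A]
    (hA : Function.Bijective (algebraMap Q A)) [AddCommGroup M] [Module A M] [Module Q M]
    [IsScalarTower Q A M] {n : ℕ} (hM : ProjDimLE Q M n) : ProjDimLE A M n := by
  let e := RingEquiv.ofBijective (algebraMap Q A) hA
  have := RingHomInvPair.of_ringEquiv e
  have := RingHomInvPair.symm (e : Q →+* A) (e.symm : A →+* Q)
  let e' : M ≃ₛₗ[RingHomClass.toRingHom e] M :=
    { AddEquiv.refl M with map_smul' := fun q m ↦ (algebraMap_smul A q m).symm }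
  exact ModuleCat.hasProjectiveDimensionLE_of_semiLinearEquiv e (M := ModuleCat.of Q M)
    (N := ModuleCat.of A M) e' n

variable {Q : Type u} [CommRing Q]

lemma projDimLE_quotient_ofList {f : List Q} (hf : IsWeaklyRegular Q f) :
    ProjDimLE Q (Q ⧸ Ideal.ofList f) f.length := by
  have h := (ProjDimLE.of_projective 0).quotient_ofList_smul_top hf
  rw [zero_add] at h
  exact h.of_linearEquiv (Submodule.quotEquivOfEq _ _ (by simp))

lemma isWeaklyRegular_concat_iff {g : List Q} {r : Q} : IsWeaklyRegular Q (g ++ [r]) ↔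
    IsWeaklyRegular Q g ∧
      IsSMulRegular (Q ⧸ Ideal.ofList g) (algebraMap Q (Q ⧸ Ideal.ofList g) r) := by
  have e : (Q ⧸ Ideal.ofList g • (⊤ : Ideal Q)) ≃ₗ[Q] Q ⧸ Ideal.ofList g :=
    Submodule.quotEquivOfEq _ _ (by simp)
  rw [isWeaklyRegular_append_iff, isWeaklyRegular_singleton_iff, e.isSMulRegular_congr,
    isSMulRegular_algebraMap_iff]

namespace TorVanishesAbove

lemma of_projDimLE_of_ker_eq_span_singleton {B A M N : Type u} [CommRing B] [CommRing A]
    [Algebra Q B] [Algebra B A] [AddCommGroup M] [Module A M] [Module Q M] [Module B M]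
    [IsScalarTower B A M] [IsScalarTower Q B M] [AddCommGroup N] [Module A N] [Module B N]
    [IsScalarTower B A N] {k : ℕ} {r : B} (hA : Function.Surjective (algebraMap B A))
    (hker : RingHom.ker (algebraMap B A) = Ideal.span {r}) (hr : IsSMulRegular B r) {c : ℕ}
    (hB : ProjDimLE Q B c) (hM : ProjDimLE Q M (c + 1 + k))
    (ih : ∀ (K : Type u) [AddCommGroup K] [Module B K] [Module Q K] [IsScalarTower Q B K],
      ProjDimLE Q K (c + k) → (∃ n, TorVanishesAbove B K N n) → TorVanishesAbove B K N k)
    (h : ∃ n, TorVanishesAbove A M N n) : TorVanishesAbove A M N k := by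
  obtain ⟨F, _, _, _, p, hp⟩ := exists_free_surjective B M
  let _ : Module Q F := Module.compHom F (algebraMap Q B)
  have : IsScalarTower Q B F := .of_algebraMap_smul fun _ _ ↦ rfl
  have hF : ProjDimLE Q F (c + k) := (hB.restrictScalars_of_projective F).mono (by lia)
  have hK : ProjDimLE Q p.ker (c + k) :=
    .left (f := p.ker.subtype.restrictScalars Q) (g := p.restrictScalars Q)
      p.ker.subtype_injective p.exact_subtype_ker_map hp hF (by rwa [Nat.add_right_comm])
  exact .of_ker hA hker hr hp (ih p.ker hK) h

theorem of_projDimLE_of_ker_eq_ofList {A M N : Type u} [CommRing A] [Algebra Q A]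
    [AddCommGroup M] [Module A M] [Module Q M] [IsScalarTower Q A M] [AddCommGroup N] [Module A N]
    {k : ℕ} {f : List Q} (hf : IsWeaklyRegular Q f)
    (hA : Function.Surjective (algebraMap Q A))
    (hker : RingHom.ker (algebraMap Q A) = Ideal.ofList f) (hM : ProjDimLE Q M (f.length + k))
    (h : ∃ n, TorVanishesAbove A M N n) : TorVanishesAbove A M N k := by
  induction f using List.reverseRecOn generalizing A M with
  | nil =>
    have hinj := (RingHom.injective_iff_ker_eq_bot _).mpr (hker.trans Ideal.ofList_nil)
    rw [List.length_nil, zero_add] at hM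
    exact .of_projDimLE N (hM.of_bijective_algebraMap ⟨hinj, hA⟩)
  | append_singleton g r ih =>
    obtain ⟨hg, hr⟩ := isWeaklyRegular_concat_iff.mp hf
    rw [Ideal.ofList_append, Ideal.ofList_singleton] at hker
    let B := Q ⧸ Ideal.ofList g
    have hgk : Ideal.ofList g ≤ RingHom.ker (algebraMap Q A) := hker ▸ le_sup_left
    let _ : Algebra B A := (Ideal.Quotient.lift _ (algebraMap Q A) hgk).toAlgebra
    let _ : Module B M := Module.compHom M (algebraMap B A)
    let _ : Module B N := Module.compHom N (algebraMap B A)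
    have : IsScalarTower B A M := .of_algebraMap_smul fun _ _ ↦ rfl
    have : IsScalarTower B A N := .of_algebraMap_smul fun _ _ ↦ rfl
    have : IsScalarTower Q B M := .of_algebraMap_smul fun q m ↦ algebraMap_smul A q m
    have hkerB : RingHom.ker (algebraMap B A) = Ideal.span {algebraMap Q B r} := by
      refine (Ideal.ker_quotient_lift (algebraMap Q A) hgk).trans ?_
      rw [hker, Ideal.map_sup, Ideal.map_quotient_self, bot_sup_eq, Ideal.map_span,
        Set.image_singleton]
      rfl
    exact of_projDimLE_of_ker_eq_span_singleton
      (Ideal.Quotient.lift_surjective_of_surjective _ hgk hA) hkerB hr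
      (projDimLE_quotient_ofList hg) (by simpa using hM)
      (fun K ↦ ih hg Ideal.Quotient.mk_surjective Ideal.mk_ker) h

end TorVanishesAbove

end RegularSequence

namespace ProjDimLE

open IsLocalRing RingTheory.Sequence

variable {A : Type u} [CommRing A] [IsLocalRing A] [IsNoetherianRing A] {X : Type u}
  [AddCommGroup X] [Module A X] [Module.Finite A X] {n : ℕ}

lemma of_quotSMulTop {r : A} (hr : IsSMulRegular X r) (hrm : r ∈ maximalIdeal A)
    (h : ProjDimLE A (QuotSMulTop r X) (n + 1)) : ProjDimLE A X n := by
  rw [ProjDimLE, ← projectiveDimension_le_iff] at h ⊢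
  have hpd := ModuleCat.projectiveDimension_quotSMulTop_eq_succ_of_isSMulRegular
    (ModuleCat.of A X) r hr hrm
  exact ENat.WithBot.add_le_add_one_right_iff.mp (hpd.symm.trans_le (by exact_mod_cast h))

lemma of_quotient_ofList_smul_top {rs : List A}
    (hrs : IsWeaklyRegular X rs) (hrsm : ∀ r ∈ rs, r ∈ maximalIdeal A)
    (h : ProjDimLE A (X ⧸ Ideal.ofList rs • (⊤ : Submodule A X)) (n + rs.length)) :
    ProjDimLE A X n := by
  induction rs generalizing X n with
  | nil => exact h.of_linearEquiv (Submodule.quotEquivOfEqBot _ (by simp))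
  | cons r rs ih =>
    rw [isWeaklyRegular_cons_iff] at hrs
    rw [List.length_cons, add_comm rs.length, ← add_assoc] at h
    rw [List.forall_mem_cons] at hrsm
    exact of_quotSMulTop hrs.1 hrsm.1 (ih hrs.2 hrsm.2
      (h.of_linearEquiv (Submodule.quotOfListConsSMulTopEquivQuotSMulTopInner X r rs)))

end ProjDimLE

section LocalRing

open IsLocalRing

variable {R : Type u} [CommRing R]

lemma exists_span_insert_erase_eq_span [IsLocalRing R] {M : Type*} [AddCommGroup M] [Module R M]
    [DecidableEq M] {s : Finset M} {x : M} (hx : x ∈ Submodule.span R (s : Set M))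
    (hx' : x ∉ maximalIdeal R • Submodule.span R (s : Set M)) :
    ∃ y ∈ s, Submodule.span R (insert x (s.erase y : Set M)) = Submodule.span R s := by
  obtain ⟨a, -, rfl⟩ := Submodule.mem_span_finset.mp hx
  obtain ⟨y, hy, hay⟩ : ∃ y ∈ s, a y ∉ maximalIdeal R := by
    by_contra! h
    exact hx' (Submodule.sum_mem _ fun y hy ↦
      Submodule.smul_mem_smul (h y hy) (Submodule.subset_span hy))
  rw [mem_maximalIdeal, mem_nonunits_iff, not_not] at hay
  refine ⟨y, hy, le_antisymm (Submodule.span_le.mpr (Set.insert_subset hx ?_)) ?_⟩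
  · exact (Finset.coe_subset.mpr (s.erase_subset y)).trans Submodule.subset_span
  set I := Submodule.span R (insert (∑ z ∈ s, a z • z) (s.erase y : Set M))
  have herase (z : M) (hz : z ∈ s.erase y) : z ∈ I := Submodule.subset_span (Or.inr hz)
  have hyI : y ∈ I := by
    have hsum : ∑ z ∈ s, a z • z ∈ I := Submodule.subset_span (Or.inl rfl)
    rw [← Finset.add_sum_erase s _ hy,
      I.add_mem_iff_left (I.sum_mem fun z hz ↦ I.smul_mem _ (herase z hz))] at hsum
    exact (I.smul_mem_iff_of_isUnit hay).mp hsum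
  rw [Submodule.span_le, ← Finset.insert_erase hy, Finset.coe_insert]
  exact Set.insert_subset hyI herase

variable [IsNoetherianRing R] {x : R}

lemma isDomain_of_isPrime_span_singleton (hxj : x ∈ Ideal.jacobson ⊥)
    (hx : ∀ p ∈ minimalPrimes R, x ∉ p) (hprime : (Ideal.span {x}).IsPrime) : IsDomain R := by
  obtain ⟨p, hp, hpx⟩ := Ideal.exists_minimalPrimes_le (bot_le : ⊥ ≤ Ideal.span {x})
  have hpprime : p.IsPrime := hp.1.1
  have hple : p ≤ (Ideal.jacobson ⊥ : Ideal R) • p := by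
    intro y hy
    obtain ⟨z, rfl⟩ := Ideal.mem_span_singleton.mp (hpx hy)
    exact Ideal.mul_mem_mul hxj ((hpprime.mem_or_mem hy).resolve_left (hx p hp))
  obtain rfl : p = ⊥ :=
    Submodule.eq_bot_of_le_smul_of_le_jacobson_bot _ p (IsNoetherian.noetherian _) hple le_rfl
  exact IsDomain.of_bot_isPrime R

variable [IsLocalRing R]

lemma spanFinrank_maximalIdeal_quotient_add_one_le (hx : x ∈ maximalIdeal R)
    (hx' : x ∉ maximalIdeal R ^ 2) [IsLocalRing (R ⧸ Ideal.span {x})] :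
    (maximalIdeal (R ⧸ Ideal.span {x})).spanFinrank + 1 ≤ (maximalIdeal R).spanFinrank := by
  classical
  obtain ⟨s, hs, hspan⟩ :=
    (IsNoetherian.noetherian (maximalIdeal R)).exists_span_finset_card_eq_spanFinrank
  change Ideal.span (s : Set R) = _ at hspan
  rw [sq] at hx'
  rw [← hspan] at hx
  nth_rw 2 [← hspan] at hx'
  obtain ⟨y, hy, hxy⟩ := exists_span_insert_erase_eq_span hx hx'
  have hxspan : Ideal.span (insert x (s.erase y : Set R)) = maximalIdeal R := hxy.trans hspan
  have hgen : maximalIdeal (R ⧸ Ideal.span {x}) =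
      Ideal.span (Ideal.Quotient.mk (Ideal.span {x}) '' (s.erase y)) := by
    rw [← map_maximalIdeal_of_surjective _ Ideal.Quotient.mk_surjective, ← hxspan, Ideal.map_span,
      Set.image_insert_eq, Ideal.Quotient.mk_singleton_self, Ideal.span_insert_zero]
  rw [← hs, ← Finset.card_erase_add_one hy, hgen]
  gcongr
  refine (Submodule.spanFinrank_span_le_ncard_of_finite (Set.toFinite _)).trans ?_
  exact (Set.ncard_image_le (Finset.finite_toSet _)).trans_eq (Set.ncard_coe_finset _)

lemma exists_mem_maximalIdeal_notMem_sq_notMem_minimalPrimes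
    (h : maximalIdeal R ∉ minimalPrimes R) :
    ∃ x ∈ maximalIdeal R, x ∉ maximalIdeal R ^ 2 ∧ ∀ p ∈ minimalPrimes R, x ∉ p := by
  have hsq : ¬ maximalIdeal R ≤ maximalIdeal R ^ 2 := by
    intro hle
    have hbot : maximalIdeal R = ⊥ := Submodule.eq_bot_of_le_smul_of_le_jacobson_bot _ _
      (IsNoetherian.noetherian _) (by rwa [smul_eq_mul, ← sq]) (maximalIdeal_le_jacobson _)
    have := (isField_iff_maximalIdeal_eq.mpr hbot).isDomain
    exact h (by simp [IsDomain.minimalPrimes_eq_singleton_bot, hbot])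
  have hunion : ¬ (maximalIdeal R : Set R) ⊆
      ⋃ p ∈ insert (maximalIdeal R ^ 2) (minimalPrimes R), (p : Set R) := by
    rw [Ideal.subset_union_prime_finite (f := fun p ↦ p)
      ((minimalPrimes.finite_of_isNoetherianRing R).insert _) (maximalIdeal R ^ 2)
      (maximalIdeal R ^ 2)]
    · rintro ⟨p, rfl | hp, hle⟩
      · exact hsq hle
      · exact h (((maximalIdeal.isMaximal R).eq_of_le hp.1.1.ne_top hle) ▸ hp)
    · rintro p (rfl | hp) hne -
      exacts [absurd rfl hne, hp.1.1]
  obtain ⟨x, hxm, hx⟩ := Set.not_subset.mp hunion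
  simp only [Set.mem_iUnion, not_exists, Set.mem_insert_iff, SetLike.mem_coe] at hx
  exact ⟨x, hxm, hx _ (Or.inl rfl), fun p hp ↦ hx p (Or.inr hp)⟩

end LocalRing

section RegularLocalRing

open IsLocalRing

variable {Q : Type u} [CommRing Q] {x : Q}

lemma IsRegularLocal.isRegularLocalRing [IsLocalRing Q] (h : IsRegularLocal Q) :
    IsRegularLocalRing Q := by
  obtain ⟨_, s, hs, hcard⟩ := h
  refine .of_spanFinrank_maximalIdeal_le Q ?_
  rw [← hs, ← hcard, Nat.cast_le]
  exact (Submodule.spanFinrank_span_le_ncard_of_finite s.finite_toSet).trans_eq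
    (Set.ncard_coe_finset s)

variable [IsRegularLocalRing Q]

lemma isRegularLocalRing_quotient_span_singleton (hx : x ∈ maximalIdeal Q)
    (hx' : x ∉ maximalIdeal Q ^ 2) : IsRegularLocalRing (Q ⧸ Ideal.span {x}) := by
  have : Nontrivial (Q ⧸ Ideal.span {x}) := Ideal.Quotient.nontrivial_iff.mpr fun h ↦
    hx (Ideal.span_singleton_eq_top.mp h)
  have : IsLocalRing (Q ⧸ Ideal.span {x}) :=
    .of_surjective' (Ideal.Quotient.mk _) Ideal.Quotient.mk_surjective
  refine .of_spanFinrank_maximalIdeal_le _ ?_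
  rw [← ENat.WithBot.add_le_add_one_right_iff]
  calc ((maximalIdeal (Q ⧸ Ideal.span {x})).spanFinrank + 1 : WithBot ℕ∞)
    _ ≤ (maximalIdeal Q).spanFinrank :=
      mod_cast spanFinrank_maximalIdeal_quotient_add_one_le hx hx'
    _ = (maximalIdeal Q).height := by
      rw [IsRegularLocalRing.spanFinrank_maximalIdeal, maximalIdeal_height_eq_ringKrullDim]
    _ ≤ ringKrullDim (Q ⧸ Ideal.span {x}) + 1 := Ideal.height_le_ringKrullDim_quotient_add_one hx

variable (Q) in
lemma isField_or_exists_mem_maximalIdeal_notMem_sq : IsField Q ∨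
    ∃ x ∈ maximalIdeal Q, x ∉ maximalIdeal Q ^ 2 ∧ ∀ p ∈ minimalPrimes Q, x ∉ p := by
  rw [or_iff_not_imp_right]
  intro h
  have hmin := not_imp_comm.mp exists_mem_maximalIdeal_notMem_sq_notMem_minimalPrimes h
  have hrank := IsRegularLocalRing.spanFinrank_maximalIdeal (R := Q)
  rw [← maximalIdeal_height_eq_ringKrullDim, Ideal.height_eq_zero_iff.mpr hmin] at hrank
  rw [isField_iff_maximalIdeal_eq,
    ← Submodule.spanFinrank_eq_zero_iff_eq_bot (IsNoetherian.noetherian _)]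
  exact_mod_cast hrank

variable (Q) in
theorem isDomain_of_isRegularLocalRing : IsDomain Q := by
  induction hn : (maximalIdeal Q).spanFinrank using Nat.strong_induction_on generalizing Q with
  | _ n ih =>
  rcases isField_or_exists_mem_maximalIdeal_notMem_sq Q with hQ | ⟨x, hx, hx', hxmin⟩
  · exact hQ.isDomain
  have := isRegularLocalRing_quotient_span_singleton hx hx'
  have hlt : (maximalIdeal (Q ⧸ Ideal.span {x})).spanFinrank < n :=
    hn ▸ spanFinrank_maximalIdeal_quotient_add_one_le hx hx'
  exact isDomain_of_isPrime_span_singleton (maximalIdeal_le_jacobson _ hx) hxmin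
    ((Ideal.Quotient.isDomain_iff_prime _).mp (ih _ hlt (Q ⧸ Ideal.span {x}) rfl))

end RegularLocalRing

namespace ProjDimLE

open IsLocalRing RingTheory.Sequence

variable {Q : Type u} [CommRing Q]

lemma succ_of_quotient_span_singleton [IsLocalRing Q] [IsNoetherianRing Q] {x : Q}
    (hx : IsSMulRegular Q x) (hxm : x ∈ maximalIdeal Q) {n : ℕ}
    (h : ∀ (V : Type u) [AddCommGroup V] [Module (Q ⧸ Ideal.span {x}) V]
      [Module.Finite (Q ⧸ Ideal.span {x}) V], ProjDimLE (Q ⧸ Ideal.span {x}) V n)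
    (L : Type u) [AddCommGroup L] [Module Q L] [Module.Finite Q L] : ProjDimLE Q L (n + 1) := by
  obtain ⟨k, p, hp⟩ := Module.Finite.exists_fin' Q L
  have hxK : IsSMulRegular p.ker x := (IsSMulRegular.pi fun _ ↦ hx).submodule _ _
  have hQx : ProjDimLE Q (Q ⧸ Ideal.span {x}) 1 := by
    have := projDimLE_quotient_ofList ((isWeaklyRegular_singleton_iff Q x).mpr hx)
    rwa [Ideal.ofList_singleton] at this
  have : Module.Finite (Q ⧸ Ideal.span {x}) (QuotSMulTop x p.ker) :=
    .of_restrictScalars_finite Q _ _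
  have hK : ProjDimLE Q p.ker n := .of_quotSMulTop hxK hxm (hQx.restrictScalars (h _))
  exact .right p.ker.subtype_injective p.exact_subtype_ker_map hp hK (.of_projective _)

variable [IsRegularLocalRing Q] (L : Type u) [AddCommGroup L] [Module Q L] [Module.Finite Q L]

theorem spanFinrank_maximalIdeal : ProjDimLE Q L (maximalIdeal Q).spanFinrank := by
  induction hn : (maximalIdeal Q).spanFinrank using Nat.strong_induction_on generalizing Q L with
  | _ n ih =>
  rcases isField_or_exists_mem_maximalIdeal_notMem_sq Q with hQ | ⟨x, hx, hx', -⟩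
  · let := hQ.toField
    have : Module.Projective Q L := .of_free
    exact .of_projective n
  have := isDomain_of_isRegularLocalRing Q
  have := isRegularLocalRing_quotient_span_singleton hx hx'
  have hlt := spanFinrank_maximalIdeal_quotient_add_one_le hx hx'
  have hx0 : x ≠ 0 := fun h ↦ hx' (h ▸ zero_mem _)
  rw [hn] at hlt
  exact (succ_of_quotient_span_singleton (fun y z h ↦ mul_left_cancel₀ hx0 h) hx
    (fun V ↦ ih _ hlt V rfl) L).mono hlt

/-- The Auslander–Buchsbaum inequality. -/
theorem of_ringKrullDim_le {rs : List Q} (hrs : IsWeaklyRegular L rs)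
    (hrsm : ∀ r ∈ rs, r ∈ maximalIdeal Q) {n : ℕ} (hn : ringKrullDim Q ≤ n + rs.length) :
    ProjDimLE Q L n := by
  rw [← IsRegularLocalRing.spanFinrank_maximalIdeal] at hn
  exact .of_quotient_ofList_smul_top hrs hrsm ((spanFinrank_maximalIdeal _).mono (mod_cast hn))

end ProjDimLE

section CompleteIntersection

open IsLocalRing RingTheory.Sequence

lemma exists_isWeaklyRegular_of_le_moduleDepth {R M : Type u} [CommRing R] [IsLocalRing R]
    [AddCommGroup M] [Module R M] {n : ℕ} (h : (n : ℕ∞) ≤ moduleDepth R M) :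
    ∃ rs : List R, n ≤ rs.length ∧ (∀ x ∈ rs, x ∈ maximalIdeal R) ∧ IsWeaklyRegular M rs := by
  rcases n with _ | n
  · exact ⟨[], le_rfl, by simp, .nil R M⟩
  · have hlt : (n : ℕ∞) < moduleDepth R M := (Nat.cast_lt.mpr n.lt_succ_self).trans_le h
    obtain ⟨_, ⟨rs, rfl, hrsm, hrs⟩, hn⟩ := lt_sSup_iff.mp hlt
    exact ⟨rs, Nat.cast_lt.mp hn, hrsm, hrs.toIsWeaklyRegular⟩

lemma exists_isWeaklyRegular_of_le_moduleDepth_of_surjective {Q R M : Type u} [CommRing Q]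
    [IsLocalRing Q] [CommRing R] [IsLocalRing R] [Algebra Q R] [AddCommGroup M] [Module R M]
    [Module Q M] [IsScalarTower Q R M] (hR : Function.Surjective (algebraMap Q R)) {n : ℕ}
    (h : (n : ℕ∞) ≤ moduleDepth R M) :
    ∃ rs : List Q, n ≤ rs.length ∧ (∀ x ∈ rs, x ∈ maximalIdeal Q) ∧ IsWeaklyRegular M rs := by
  obtain ⟨rs, hn, hrsm, hrs⟩ := exists_isWeaklyRegular_of_le_moduleDepth h
  obtain ⟨rs, rfl⟩ := List.map_surjective_iff.mpr hR rs
  refine ⟨rs, by simpa using hn, fun x hx hunit ↦ ?_,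
    (isWeaklyRegular_map_algebraMap_iff R M rs).mp hrs⟩
  exact hrsm _ (List.mem_map_of_mem hx) (hunit.map _)

theorem ProjDimLE.of_ringKrullDim_le_moduleDepth_add {Q : Type u} [CommRing Q]
    [IsRegularLocalRing Q] {f : List Q} (hf : IsRegular Q f) [IsLocalRing (Q ⧸ Ideal.ofList f)]
    (M : Type u) [AddCommGroup M] [Module (Q ⧸ Ideal.ofList f) M] [Module Q M]
    [IsScalarTower Q (Q ⧸ Ideal.ofList f) M] [Module.Finite Q M] {k : ℕ}
    (hM : ringKrullDim (Q ⧸ Ideal.ofList f) ≤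
      (moduleDepth (Q ⧸ Ideal.ofList f) M : WithBot ℕ∞) + k) :
    ProjDimLE Q M (f.length + k) := by
  have hdim := ringKrullDim_add_length_eq_ringKrullDim_of_isRegular f hf
  obtain ⟨d, hd⟩ : ∃ d : ℕ, ringKrullDim (Q ⧸ Ideal.ofList f) = d := by
    have htop := Ideal.height_ne_top (maximalIdeal.isMaximal (Q ⧸ Ideal.ofList f)).ne_top
    obtain ⟨d, hd⟩ := ENat.ne_top_iff_exists.mp htop
    exact ⟨d, by rw [← maximalIdeal_height_eq_ringKrullDim, ← hd]; rfl⟩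
  have hdepth : ((d - k : ℕ) : ℕ∞) ≤ moduleDepth (Q ⧸ Ideal.ofList f) M := by
    rw [hd] at hM
    rw [ENat.natCast_sub, tsub_le_iff_right]
    exact_mod_cast hM
  obtain ⟨rs, hrs_length, hrsm, hrs⟩ :=
    exists_isWeaklyRegular_of_le_moduleDepth_of_surjective Ideal.Quotient.mk_surjective hdepth
  refine .of_ringKrullDim_le M hrs hrsm ?_
  rw [← hdim, hd]
  norm_cast
  lia

lemma TorVanishesAbove.of_ringKrullDim_le_moduleDepth_add {Q : Type u} [CommRing Q]
    [IsRegularLocalRing Q] {f : List Q} (hf : IsRegular Q f) [IsLocalRing (Q ⧸ Ideal.ofList f)]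
    {M N : Type u} [AddCommGroup M] [Module (Q ⧸ Ideal.ofList f) M]
    [Module.Finite (Q ⧸ Ideal.ofList f) M] [AddCommGroup N] [Module (Q ⧸ Ideal.ofList f) N]
    {k : ℕ} (hM : ringKrullDim (Q ⧸ Ideal.ofList f) ≤
      (moduleDepth (Q ⧸ Ideal.ofList f) M : WithBot ℕ∞) + k)
    (h : ∃ n, TorVanishesAbove (Q ⧸ Ideal.ofList f) M N n) :
    TorVanishesAbove (Q ⧸ Ideal.ofList f) M N k := by
  let _ : Module Q M := Module.compHom M (Ideal.Quotient.mk (Ideal.ofList f))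
  have : IsScalarTower Q (Q ⧸ Ideal.ofList f) M := .of_algebraMap_smul fun _ _ ↦ rfl
  have : Module.Finite Q M := .trans (Q ⧸ Ideal.ofList f) M
  exact .of_projDimLE_of_ker_eq_ofList hf.toIsWeaklyRegular Ideal.Quotient.mk_surjective
    Ideal.mk_ker (.of_ringKrullDim_le_moduleDepth_add hf M hM) h

theorem stmt_3_general (Q : Type u) [CommRing Q] [IsLocalRing Q] (hQ : IsRegularLocal Q)
    (f : List Q) (hf : IsRegular Q f) [IsLocalRing (Q ⧸ Ideal.ofList f)]
    (M N : ModuleCat.{u} (Q ⧸ Ideal.ofList f)) (k : ℕ)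
    (hdepth : (Module.Finite (Q ⧸ Ideal.ofList f) M ∧ ringKrullDim (Q ⧸ Ideal.ofList f) ≤
        (moduleDepth (Q ⧸ Ideal.ofList f) M : WithBot ℕ∞) + k) ∨
      (Module.Finite (Q ⧸ Ideal.ofList f) N ∧ ringKrullDim (Q ⧸ Ideal.ofList f) ≤
        (moduleDepth (Q ⧸ Ideal.ofList f) N : WithBot ℕ∞) + k))
    (htor : ∃ n : ℕ, ∀ i : ℕ, n ≤ i →
      IsZero (((Tor (ModuleCat.{u} (Q ⧸ Ideal.ofList f)) i).obj M).obj N)) :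
    ∀ i : ℕ, k < i →
      IsZero (((Tor (ModuleCat.{u} (Q ⧸ Ideal.ofList f)) i).obj M).obj N) := by
  have := hQ.isRegularLocalRing
  obtain ⟨n, hn⟩ := htor
  have hMN : TorVanishesAbove (Q ⧸ Ideal.ofList f) M N n := fun i hi ↦ hn i hi.le
  change TorVanishesAbove (Q ⧸ Ideal.ofList f) M N k
  rcases hdepth with ⟨_, hM⟩ | ⟨_, hN⟩
  · exact .of_ringKrullDim_le_moduleDepth_add hf hM ⟨n, hMN⟩
  · exact (TorVanishesAbove.of_ringKrullDim_le_moduleDepth_add hf hN ⟨n, hMN.symm⟩).symm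

end CompleteIntersection

theorem stmt_3 (Q : Type u) [CommRing Q] [IsLocalRing Q] (hQ : IsRegularLocal Q)
    (f : List Q) (hf : RingTheory.Sequence.IsRegular Q f)
    [IsLocalRing (Q ⧸ Ideal.ofList f)]
    (M N : ModuleCat.{u} (Q ⧸ Ideal.ofList f))
    [Module.Finite (Q ⧸ Ideal.ofList f) M] [Module.Finite (Q ⧸ Ideal.ofList f) N]
    (hMCM : (moduleDepth (Q ⧸ Ideal.ofList f) M : WithBot ℕ∞) =
        ringKrullDim (Q ⧸ Ideal.ofList f) ∨
      (moduleDepth (Q ⧸ Ideal.ofList f) N : WithBot ℕ∞) = ringKrullDim (Q ⧸ Ideal.ofList f))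
    (htor : ∃ n : ℕ, ∀ i : ℕ, n ≤ i →
      IsZero (((Tor (ModuleCat.{u} (Q ⧸ Ideal.ofList f)) i).obj M).obj N)) :
    ∀ i : ℕ, 0 < i →
      IsZero (((Tor (ModuleCat.{u} (Q ⧸ Ideal.ofList f)) i).obj M).obj N) :=
  stmt_3_general Q hQ f hf M N 0 (hMCM.imp (fun hM ↦ ⟨inferInstance, by simp [hM]⟩)
    fun hN ↦ ⟨inferInstance, by simp [hN]⟩) htor
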